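/- Let a_0, ..., a_{n−1} be positive integers, C a capacity, and k a number of bins with ∑_{x=0}^{n−1} a_x = Ck. Define graphs G and H as follows. Both contain B = {b_0,...,b_{k−1}} forming a clique and D = {d_0,...,d_{Ck−1}} forming a clique. In H, additionally b_i is adjacent to d_j exactly when ⌊j/C⌋ = i, and H has no other vertices or edges. In G there are no edges between B and D; instead G additionally contains an independent set T = {t_0,...,t_{n−1}} with all edges between T and B present, and for each x a set A_x of a_x further vertices each adjacent to t_x, where A = A_0 ∪ ... ∪ A_{n−1} is an independent set with all edges between A and D present (and no other edges). Then there exists an assignment φ: {0,...,n−1} → {0,...,k−1} with ∑_{x: φ(x)=i} a_x = C for every i ∈ {0,...,k−1} if and only if H is a labeled contraction of G. -/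

import Mathlib

/-!
Every labeled contraction sequence `S` induces a map `seqMap S` sending each original vertex to
the surviving vertex it has been merged into. The contracted graph is then the quotient of `G`
along this map: two distinct vertices are adjacent iff some edge of `G` joins their fibers
(`contractSeq_adj`). Conversely, merging the vertices of a list `L` into neighbours outside `L`
realizes a prescribed map (`validSeq_star`, `seqMap_star`). Both directions are read off from this
description.

A perfect packing `φ` is the same thing as a bijection `σ` from the units to the slots
that sends every unit of item `x` to a slot of bin `φ x` (`packing_iff`).

* Given `φ` and `σ`, contract `t_x` into `b_{φ x}` and each unit `u` into `d_{σ u}`. The only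
  edges of `G` that yield edges between `B` and `D` are those joining `t_x` to a unit of `A_x`,
  and these yield exactly the edges of `H`.
* Given a contraction to `H`, the cases `k ≤ 1` and `C = 0` are trivial. Otherwise no `t_x` is
  merged into some `d_j`, because `d_j` would become adjacent to all of `B`, and no unit is merged
  into some `b_i`, because `b_i` would become adjacent to all of `D`. Hence each edge `b_i d_j` of
  `H` comes from an edge between an item in bin `i` and one of its units merged into `d_j`.
  So the map from units to slots is surjective; the two sets have the same size, so it is
  bijective, and it is compatible with the bins.
-/

/-- A finite simple labeled graph: a finite vertex set together with a symmetric,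
irreflexive adjacency relation supported on the vertex set.  Two labeled graphs are
equal iff they have the same vertex set and the same edge set. -/
structure LGraph (α : Type) where
  verts : Finset α
  Adj : α → α → Prop
  symm : ∀ {u v}, Adj u v → Adj v u
  loopless : ∀ u, ¬ Adj u u
  mem_of_adj : ∀ {u v}, Adj u v → u ∈ verts ∧ v ∈ verts

namespace LGraph

variable {α : Type}

/-- Build a labeled graph from a vertex set and an arbitrary relation
(which gets symmetrized, made irreflexive and restricted to the vertex set). -/
def mk' (vs : Finset α) (r : α → α → Prop) : LGraph α where
  verts := vs
  Adj x y := x ≠ y ∧ x ∈ vs ∧ y ∈ vs ∧ (r x y ∨ r y x)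
  symm := by
    rintro u v ⟨hne, hu, hv, hr⟩
    exact ⟨hne.symm, hv, hu, hr.symm⟩
  loopless := by
    rintro u ⟨hne, -⟩
    exact hne rfl
  mem_of_adj := by
    rintro u v ⟨-, hu, hv, -⟩
    exact ⟨hu, hv⟩

variable [DecidableEq α]

/-- The labeled contraction `G/(u,v)`: add an edge between `u` and every vertex of
`N_G(v) \ N_G[u]`, then delete `v` and all its incident edges. -/
def contract (G : LGraph α) (u v : α) : LGraph α where
  verts := G.verts.erase v
  Adj x y := x ≠ y ∧ x ∈ G.verts.erase v ∧ y ∈ G.verts.erase v ∧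
    (G.Adj x y ∨ (x = u ∧ G.Adj v y) ∨ (y = u ∧ G.Adj v x))
  symm := by
    rintro a b ⟨hne, ha, hb, h⟩
    refine ⟨hne.symm, hb, ha, ?_⟩
    rcases h with h | h | h
    · exact Or.inl (G.symm h)
    · exact Or.inr (Or.inr h)
    · exact Or.inr (Or.inl h)
  loopless := by
    rintro a ⟨hne, -⟩
    exact hne rfl
  mem_of_adj := by
    rintro a b ⟨-, ha, hb, -⟩
    exact ⟨ha, hb⟩

/-- The result `G/S` of applying a list of labeled contractions successively. -/
def contractSeq : LGraph α → List (α × α) → LGraph α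
  | G, [] => G
  | G, (u, v) :: S => (G.contract u v).contractSeq S

/-- A list of pairs is a valid labeled contraction sequence on `G` if each pair is an
edge of the current graph when it is contracted. -/
def ValidSeq : LGraph α → List (α × α) → Prop
  | _, [] => True
  | G, (u, v) :: S => G.Adj u v ∧ (G.contract u v).ValidSeq S

/-- `H` is a labeled contraction of `G` if `G/S = H` for some labeled
contraction sequence `S` on `G`. -/
def IsContractionOf (H G : LGraph α) : Prop :=
  ∃ S : List (α × α), G.ValidSeq S ∧ G.contractSeq S = H

/-- Reachability inside a set `W` of vertices, using only edges of `G` with both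
endpoints in `W`. -/
def ReachIn (G : LGraph α) (W : Finset α) (x y : α) : Prop :=
  Relation.ReflTransGen (fun a b => a ∈ W ∧ b ∈ W ∧ G.Adj a b) x y

/-- A witness structure of `G` into `H`: a partition of `V(G)` into `|V(H)|` nonempty
sets, each inducing a connected subgraph of `G` and containing exactly one vertex of
`H` (its representative), such that two distinct vertices `u, v` of `H` are adjacent
in `H` iff the sets containing them are adjacent in `G`. -/
structure IsWitnessStructure (G H : LGraph α) (W : Finset (Finset α)) : Prop where
  subset_verts : ∀ Wi ∈ W, Wi ⊆ G.verts
  nonempty : ∀ Wi ∈ W, Wi.Nonempty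
  covers : ∀ x ∈ G.verts, ∃! Wi, Wi ∈ W ∧ x ∈ Wi
  card_eq : W.card = H.verts.card
  connected : ∀ Wi ∈ W, ∀ x ∈ Wi, ∀ y ∈ Wi, G.ReachIn Wi x y
  unique_rep : ∀ Wi ∈ W, ∃! h, h ∈ H.verts ∧ h ∈ Wi
  adj_iff : ∀ u ∈ H.verts, ∀ v ∈ H.verts, u ≠ v → ∀ Wu ∈ W, ∀ Wv ∈ W,
    u ∈ Wu → v ∈ Wv → (H.Adj u v ↔ ∃ x ∈ Wu, ∃ y ∈ Wv, G.Adj x y)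

/-- The degree of `x` inside the induced subgraph on `S`. -/
noncomputable def degreeIn (G : LGraph α) (S : Finset α) (x : α) : ℕ :=
  Set.ncard {y | y ∈ S ∧ G.Adj x y}

/-- `G` is `d`-degenerate: every nonempty (induced) subgraph has a vertex of degree
at most `d`. -/
def DegenLE (G : LGraph α) (d : ℕ) : Prop :=
  ∀ S : Finset α, S ⊆ G.verts → S.Nonempty → ∃ x ∈ S, G.degreeIn S x ≤ d

/-- The degeneracy `δ(G)`: the smallest `d` such that every nonempty subgraph of `G`
has a vertex of degree at most `d`. -/
noncomputable def degeneracy (G : LGraph α) : ℕ := sInf {d | G.DegenLE d}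

/-- The degree of a vertex. -/
noncomputable def degree (G : LGraph α) (x : α) : ℕ := Set.ncard {y | G.Adj x y}

/-- The maximum degree `Δ(G)`. -/
noncomputable def maxDegree (G : LGraph α) : ℕ := G.verts.sup fun x => G.degree x

/-- The union `G ∪ H`: vertex set `V(G) ∪ V(H)` and edge set `E(G) ∪ E(H)`. -/
def union (G H : LGraph α) : LGraph α where
  verts := G.verts ∪ H.verts
  Adj x y := G.Adj x y ∨ H.Adj x y
  symm := by
    rintro u v (h | h)
    · exact Or.inl (G.symm h)
    · exact Or.inr (H.symm h)
  loopless := by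
    rintro u (h | h)
    · exact G.loopless u h
    · exact H.loopless u h
  mem_of_adj := by
    rintro u v (h | h)
    · exact ⟨Finset.mem_union_left _ (G.mem_of_adj h).1,
        Finset.mem_union_left _ (G.mem_of_adj h).2⟩
    · exact ⟨Finset.mem_union_right _ (H.mem_of_adj h).1,
        Finset.mem_union_right _ (H.mem_of_adj h).2⟩

/-- A tree decomposition of the labeled graph `G`: a tree `T` with a bag
`X_t ⊆ V(G)` for each node `t`, covering all vertices and edges, such that for every
vertex the set of nodes whose bags contain it is connected in `T`. -/
structure TreeDecomp (G : LGraph α) (ι : Type) where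
  T : SimpleGraph ι
  isTree : T.IsTree
  bag : ι → Finset α
  bag_subset : ∀ t, bag t ⊆ G.verts
  covers_vert : ∀ x ∈ G.verts, ∃ t, x ∈ bag t
  covers_edge : ∀ {u v}, G.Adj u v → ∃ t, u ∈ bag t ∧ v ∈ bag t
  coherent : ∀ (x : α) {t₁ t₂ : ι} (p : T.Walk t₁ t₂), p.IsPath →
    x ∈ bag t₁ → x ∈ bag t₂ → ∀ t ∈ p.support, x ∈ bag t

/-- `G` has a tree decomposition of width at most `w`. -/
def TreewidthLE (G : LGraph α) (w : ℕ) : Prop :=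
  ∃ (ι : Type) (D : G.TreeDecomp ι), ∀ t, (D.bag t).card ≤ w + 1

/-- The treewidth of `G`: the minimum width of a tree decomposition of `G`. -/
noncomputable def treewidth (G : LGraph α) : ℕ := sInf {w | G.TreewidthLE w}

end LGraph

/-- Vertex type of the bin-packing reduction: bins `B = {b_0,…,b_{k−1}}`, slots
`D = {d_0,…,d_{Ck−1}}`, items `T = {t_0,…,t_{n−1}}`, and item units
`A_x` of size `a x` for each item `x`. -/
abbrev BPVert (n C k : ℕ) (a : Fin n → ℕ) : Type :=
  Fin k ⊕ Fin (C * k) ⊕ Fin n ⊕ ((x : Fin n) × Fin (a x))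

namespace BPVert

variable {n C k : ℕ} {a : Fin n → ℕ}

def b (i : Fin k) : BPVert n C k a := Sum.inl i
def d (j : Fin (C * k)) : BPVert n C k a := Sum.inr (Sum.inl j)
def t (x : Fin n) : BPVert n C k a := Sum.inr (Sum.inr (Sum.inl x))
def A (x : Fin n) (m : Fin (a x)) : BPVert n C k a := Sum.inr (Sum.inr (Sum.inr ⟨x, m⟩))

end BPVert

/-- The graph `G` of the bin-packing reduction: `B` and `D` are cliques (with no
edges between them), `T` and `A` are independent sets, all edges between `T` and `B`
and between `A` and `D` are present, and each unit of `A_x` is adjacent to `t_x`. -/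
def bpG (n C k : ℕ) (a : Fin n → ℕ) : LGraph (BPVert n C k a) :=
  LGraph.mk' Finset.univ
    (fun x y =>
      (∃ i j : Fin k, x = BPVert.b i ∧ y = BPVert.b j) ∨
      (∃ i j : Fin (C * k), x = BPVert.d i ∧ y = BPVert.d j) ∨
      (∃ (i : Fin k) (x' : Fin n), x = BPVert.b i ∧ y = BPVert.t x') ∨
      (∃ (x' : Fin n) (m : Fin (a x')), x = BPVert.t x' ∧ y = BPVert.A x' m) ∨
      (∃ (x' : Fin n) (m : Fin (a x')) (j : Fin (C * k)),
        x = BPVert.A x' m ∧ y = BPVert.d j))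

/-- The graph `H` of the bin-packing reduction: only the vertices `B ∪ D`; `B` and
`D` are cliques, and `b_i` is adjacent to `d_j` exactly when `⌊j/C⌋ = i`. -/
def bpH (n C k : ℕ) (a : Fin n → ℕ) : LGraph (BPVert n C k a) :=
  LGraph.mk'
    (Finset.univ.image (BPVert.b (a := a) (n := n) (C := C)) ∪
      Finset.univ.image (BPVert.d (a := a) (n := n) (k := k)))
    (fun x y =>
      (∃ i j : Fin k, x = BPVert.b i ∧ y = BPVert.b j) ∨
      (∃ i j : Fin (C * k), x = BPVert.d i ∧ y = BPVert.d j) ∨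
      (∃ (i : Fin k) (j : Fin (C * k)),
        x = BPVert.b i ∧ y = BPVert.d j ∧ (j : ℕ) / C = (i : ℕ)))

/-! ### Contraction sequences as quotient maps -/

namespace LGraph

variable {α : Type}

theorem ext' {G H : LGraph α} (hv : G.verts = H.verts)
    (ha : ∀ x y, G.Adj x y ↔ H.Adj x y) : G = H := by
  cases G
  cases H
  simp only at hv
  subst hv
  have := funext fun x => funext fun y => propext (ha x y)
  simp only at this
  subst this
  rfl

variable [DecidableEq α]

/-- The surviving vertex into which each vertex is merged by a contraction sequence. -/
def seqMap : List (α × α) → α → α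
  | [] => id
  | (u, v) :: S => fun x => seqMap S (if x = v then u else x)

/-- The graph `G/(u,v)` is the quotient of `G` along the map sending `v` to `u`. -/
theorem contract_adj {G : LGraph α} {u v : α} (h : G.Adj u v) (x y : α) :
    (G.contract u v).Adj x y ↔ x ≠ y ∧ ∃ x' y', G.Adj x' y' ∧
      (if x' = v then u else x') = x ∧ (if y' = v then u else y') = y := by
  have huv : u ≠ v := fun e => G.loopless v (e ▸ h)
  have hu := (G.mem_of_adj h).1
  constructor
  · rintro ⟨hne, hx, hy, h1⟩
    have hx' := (Finset.mem_erase.1 hx).1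
    have hy' := (Finset.mem_erase.1 hy).1
    refine ⟨hne, ?_⟩
    rcases h1 with h1 | ⟨rfl, h1⟩ | ⟨rfl, h1⟩
    · exact ⟨x, y, h1, by simp [hx'], by simp [hy']⟩
    · exact ⟨v, y, h1, by simp, by simp [hy']⟩
    · exact ⟨x, v, G.symm h1, by simp [hx'], by simp⟩
  · rintro ⟨hne, x', y', h1, rfl, rfl⟩
    have h2 := G.mem_of_adj h1
    refine ⟨hne, ?_, ?_, ?_⟩
    · split_ifs with e
      · simp [huv, hu]
      · simp [e, h2.1]
    · split_ifs with e
      · simp [huv, hu]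
      · simp [e, h2.2]
    · by_cases e1 : x' = v <;> by_cases e2 : y' = v
      · simp [e1, e2] at hne
      · subst e1
        simp [e2, h1]
      · subst e2
        simp [e1, G.symm h1]
      · simp [e1, e2, h1]

/-- `seqMap S` is a retraction of the vertices of `G` onto those of the contracted graph. -/
theorem contractSeq_verts (S : List (α × α)) (G : LGraph α) (h : G.ValidSeq S) :
    (G.contractSeq S).verts ⊆ G.verts ∧
    (∀ x ∈ G.verts, seqMap S x ∈ (G.contractSeq S).verts) ∧
    (∀ x ∈ (G.contractSeq S).verts, seqMap S x = x) := by
  induction S generalizing G with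
  | nil => simp [contractSeq, seqMap]
  | cons p S ih =>
    obtain ⟨u, v⟩ := p
    obtain ⟨h1, h2⟩ := h
    obtain ⟨i1, i2, i3⟩ := ih _ h2
    have huv : u ≠ v := fun e => G.loopless v (e ▸ h1)
    refine ⟨i1.trans (Finset.erase_subset _ _), ?_, ?_⟩
    · intro x hx
      apply i2
      simp only [contract, Finset.mem_erase]
      split_ifs with e
      · exact ⟨huv, (G.mem_of_adj h1).1⟩
      · exact ⟨e, hx⟩
    · intro x hx
      have hxv : x ≠ v := (Finset.mem_erase.1 (i1 hx)).1
      simp only [seqMap, hxv, if_false]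
      exact i3 x hx

/-- The contracted graph is the quotient of `G` along `seqMap S`. -/
theorem contractSeq_adj (S : List (α × α)) (G : LGraph α) (h : G.ValidSeq S) (x y : α) :
    (G.contractSeq S).Adj x y ↔ x ≠ y ∧ ∃ x' y', G.Adj x' y' ∧
      seqMap S x' = x ∧ seqMap S y' = y := by
  induction S generalizing G with
  | nil =>
    simp only [contractSeq, seqMap, id]
    constructor
    · intro h
      exact ⟨fun e => G.loopless y (e ▸ h), x, y, h, rfl, rfl⟩
    · rintro ⟨-, x', y', h, rfl, rfl⟩
      exact h
  | cons p S ih =>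
    obtain ⟨u, v⟩ := p
    obtain ⟨h1, h2⟩ := h
    simp only [contractSeq, seqMap]
    rw [ih _ h2]
    refine and_congr_right fun hne => ?_
    constructor
    · rintro ⟨x', y', h3, rfl, rfl⟩
      obtain ⟨-, x'', y'', h4, rfl, rfl⟩ := (contract_adj h1 _ _).1 h3
      exact ⟨x'', y'', h4, rfl, rfl⟩
    · rintro ⟨x', y', h3, rfl, rfl⟩
      exact ⟨_, _, (contract_adj h1 _ _).2 ⟨fun e => hne (by rw [e]), x', y', h3, rfl, rfl⟩,
        rfl, rfl⟩

/-- Vertices of `L` may be contracted in any order into neighbours outside `L`. -/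
theorem validSeq_star (r : α → α) (L : List α) (hL : L.Nodup) (hr : ∀ v ∈ L, r v ∉ L)
    (G : LGraph α) (hG : ∀ v ∈ L, G.Adj (r v) v) : G.ValidSeq (L.map fun v => (r v, v)) := by
  induction L generalizing G with
  | nil => trivial
  | cons v L ih =>
    have hv := List.nodup_cons.1 hL
    refine ⟨hG v (by simp), ih hv.2 (fun w hw => ?_) _ fun w hw => ?_⟩
    · exact fun h => hr w (by simp [hw]) (by simp [h])
    · have hA := hG w (by simp [hw])
      have h1 : r w ≠ v := fun e => hr w (by simp [hw]) (by simp [e])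
      have h2 : w ≠ v := fun e => hv.1 (e ▸ hw)
      rw [contract_adj (hG v (by simp))]
      exact ⟨fun e => G.loopless w (by rwa [e] at hA), r w, w, hA, by simp [h1], by simp [h2]⟩

theorem seqMap_star (r : α → α) (L : List α) (hr : ∀ v ∈ L, r v ∉ L) (x : α) :
    seqMap (L.map fun v => (r v, v)) x = if x ∈ L then r x else x := by
  induction L generalizing x with
  | nil => simp [seqMap]
  | cons v L ih =>
    have h := ih fun w hw h => hr w (by simp [hw]) (by simp [h])
    simp only [List.map_cons, seqMap]
    rw [h]
    have h1 := hr v (by simp)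
    simp only [List.mem_cons, not_or] at h1
    by_cases e : x = v
    · subst e
      simp [h1.2]
    · simp [e]

end LGraph

/-! ### Packings as bijections -/

section Packing

variable {n C k : ℕ} {a : Fin n → ℕ}

/-- The bin containing a slot. -/
def slotBin (j : Fin (C * k)) : Fin k := ⟨j / C, Nat.div_lt_of_lt_mul j.2⟩

theorem card_slotBin (i : Fin k) : Fintype.card {j : Fin (C * k) // slotBin j = i} = C := by
  have hlt : ∀ m : Fin C, C * i + m < C * k := fun m => calc
    C * i + m < C * (i + 1) := by rw [mul_add]; have := m.2; omega
    _ ≤ C * k := Nat.mul_le_mul_left _ i.2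
  have hpos : ∀ j : Fin (C * k), 0 < C := fun j =>
    Nat.pos_of_ne_zero fun h => by have := j.2; simp [h] at this
  let e : {j : Fin (C * k) // slotBin j = i} ≃ Fin C :=
    { toFun := fun j => ⟨j.1 % C, Nat.mod_lt _ (hpos j.1)⟩
      invFun := fun m => ⟨⟨C * i + m, hlt m⟩, by
        have := m.2
        ext
        simp [slotBin, Nat.mul_add_div (show 0 < C by omega), Nat.div_eq_of_lt m.2]⟩
      left_inv := by
        rintro ⟨j, rfl⟩
        ext
        simp [slotBin, Nat.div_add_mod]
      right_inv := by
        intro m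
        ext
        simp [Nat.mod_eq_of_lt m.2] }
  simpa using Fintype.card_congr e

theorem card_units (φ : Fin n → Fin k) (i : Fin k) :
    Fintype.card {u : (x : Fin n) × Fin (a x) // φ u.1 = i} =
      ∑ x ∈ Finset.univ.filter (fun x => φ x = i), a x := by
  rw [Fintype.card_subtype]
  have : (Finset.univ.filter fun u : (x : Fin n) × Fin (a x) => φ u.1 = i) =
      (Finset.univ.filter (fun x => φ x = i)).sigma fun _ => Finset.univ := by
    ext
    simp
  rw [this, Finset.card_sigma]
  simp

/-- A perfect packing amounts to a bijection from units to slots compatible with the bins. -/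
theorem packing_iff (φ : Fin n → Fin k) :
    (∀ i : Fin k, ∑ x ∈ Finset.univ.filter (fun x => φ x = i), a x = C) ↔
      ∃ σ : ((x : Fin n) × Fin (a x)) ≃ Fin (C * k), ∀ u, slotBin (σ u) = φ u.1 := by
  constructor
  · intro h
    have e : ∀ i : Fin k, Nonempty ({u : (x : Fin n) × Fin (a x) // φ u.1 = i} ≃
        {j : Fin (C * k) // slotBin j = i}) := fun i =>
      Fintype.card_eq.1 (by rw [card_units, card_slotBin, h])
    exact ⟨Equiv.ofFiberEquiv fun i => (e i).some, fun u => Equiv.ofFiberEquiv_map _ u⟩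
  · rintro ⟨σ, hσ⟩ i
    rw [← card_units, ← card_slotBin (C := C) i]
    exact Fintype.card_congr (σ.subtypeEquiv fun u => by rw [hσ])

end Packing

/-! ### The graphs of the reduction -/

section Reduction

open BPVert

variable {n C k : ℕ} {a : Fin n → ℕ}

theorem b_inj {i i' : Fin k} : (b i : BPVert n C k a) = b i' ↔ i = i' :=
  Sum.inl_injective.eq_iff

theorem d_inj {j j' : Fin (C * k)} : (d j : BPVert n C k a) = d j' ↔ j = j' :=
  (Sum.inr_injective.comp Sum.inl_injective).eq_iff

theorem b_ne_d (i : Fin k) (j : Fin (C * k)) : (b i : BPVert n C k a) ≠ d j := Sum.inl_ne_inr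

theorem bpG_adj_bt (i : Fin k) (x : Fin n) : (bpG n C k a).Adj (b i) (t x) :=
  ⟨Sum.inl_ne_inr, Finset.mem_univ _, Finset.mem_univ _,
    Or.inl (Or.inr (Or.inr (Or.inl ⟨i, x, rfl, rfl⟩)))⟩

theorem bpG_adj_tA (u : (x : Fin n) × Fin (a x)) : (bpG n C k a).Adj (t u.1) (A u.1 u.2) :=
  ⟨by simp [t, A], Finset.mem_univ _, Finset.mem_univ _,
    Or.inl (Or.inr (Or.inr (Or.inr (Or.inl ⟨u.1, u.2, rfl, rfl⟩))))⟩

theorem bpG_adj_Ad (u : (x : Fin n) × Fin (a x)) (j : Fin (C * k)) :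
    (bpG n C k a).Adj (A u.1 u.2) (d j) :=
  ⟨by simp [d, A], Finset.mem_univ _, Finset.mem_univ _,
    Or.inl (Or.inr (Or.inr (Or.inr (Or.inr ⟨u.1, u.2, j, rfl, rfl⟩))))⟩

theorem bpG_adj_bb {i i' : Fin k} (h : i ≠ i') : (bpG n C k a).Adj (b i) (b i') :=
  ⟨fun e => h (b_inj.1 e), Finset.mem_univ _, Finset.mem_univ _, Or.inl (Or.inl ⟨i, i', rfl, rfl⟩)⟩

theorem bpG_adj_dd {j j' : Fin (C * k)} (h : j ≠ j') : (bpG n C k a).Adj (d j) (d j') :=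
  ⟨fun e => h (d_inj.1 e), Finset.mem_univ _, Finset.mem_univ _,
    Or.inl (Or.inr (Or.inl ⟨j, j', rfl, rfl⟩))⟩

/-- A symmetric property of pairs holds along all edges of `bpG` if it holds for each of the
five types of edges. -/
theorem bpG_adj_cases {P : BPVert n C k a → BPVert n C k a → Prop}
    (hsymm : ∀ x y, P x y → P y x) (hbb : ∀ i i', P (b i) (b i')) (hdd : ∀ j j', P (d j) (d j'))
    (hbt : ∀ i x, P (b i) (t x))
    (htA : ∀ u : (x : Fin n) × Fin (a x), P (t u.1) (A u.1 u.2))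
    (hAd : ∀ (u : (x : Fin n) × Fin (a x)) j, P (A u.1 u.2) (d j)) {x y : BPVert n C k a}
    (h : (bpG n C k a).Adj x y) : P x y := by
  obtain ⟨-, -, -, h⟩ := h
  rcases h with (⟨i, j, rfl, rfl⟩ | ⟨i, j, rfl, rfl⟩ | ⟨i, x, rfl, rfl⟩ | ⟨x, m, rfl, rfl⟩ |
    ⟨x, m, j, rfl, rfl⟩) | (⟨i, j, rfl, rfl⟩ | ⟨i, j, rfl, rfl⟩ | ⟨i, x, rfl, rfl⟩ |
    ⟨x, m, rfl, rfl⟩ | ⟨x, m, j, rfl, rfl⟩)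
  · exact hbb i j
  · exact hdd i j
  · exact hbt i x
  · exact htA ⟨x, m⟩
  · exact hAd ⟨x, m⟩ j
  · exact hbb j i
  · exact hdd j i
  · exact hsymm _ _ (hbt i x)
  · exact hsymm _ _ (htA ⟨x, m⟩)
  · exact hsymm _ _ (hAd ⟨x, m⟩ j)

theorem b_mem_bpH (i : Fin k) : b i ∈ (bpH n C k a).verts := by simp [bpH, LGraph.mk']

theorem d_mem_bpH (j : Fin (C * k)) : d j ∈ (bpH n C k a).verts := by simp [bpH, LGraph.mk']

theorem mem_bpH {v : BPVert n C k a} :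
    v ∈ (bpH n C k a).verts ↔ (∃ i, v = b i) ∨ ∃ j, v = d j := by
  simp [bpH, LGraph.mk', eq_comm]

theorem bpH_adj_bd (i : Fin k) (j : Fin (C * k)) :
    (bpH n C k a).Adj (b i) (d j) ↔ slotBin j = i := by
  constructor
  · rintro ⟨-, -, -, (⟨_, _, -, h⟩ | ⟨_, _, h, -⟩ | ⟨i', j', h, h', e⟩) |
      (⟨_, _, h, -⟩ | ⟨_, _, -, h⟩ | ⟨_, _, h, -, -⟩)⟩
    · exact absurd h.symm (b_ne_d _ _)
    · exact absurd h (b_ne_d _ _)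
    · rw [b_inj.1 h, d_inj.1 h']
      exact Fin.ext e
    · exact absurd h.symm (b_ne_d _ _)
    · exact absurd h (b_ne_d _ _)
    · exact absurd h.symm (b_ne_d _ _)
  · rintro rfl
    exact ⟨b_ne_d _ _, b_mem_bpH _, d_mem_bpH _, Or.inl (Or.inr (Or.inr ⟨_, j, rfl, rfl, rfl⟩))⟩

theorem bpH_adj_bb {i i' : Fin k} (h : (b i : BPVert n C k a) ≠ b i') :
    (bpH n C k a).Adj (b i) (b i') :=
  ⟨h, b_mem_bpH _, b_mem_bpH _, Or.inl (Or.inl ⟨i, i', rfl, rfl⟩)⟩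

theorem bpH_adj_dd {j j' : Fin (C * k)} (h : (d j : BPVert n C k a) ≠ d j') :
    (bpH n C k a).Adj (d j) (d j') :=
  ⟨h, d_mem_bpH _, d_mem_bpH _, Or.inl (Or.inr (Or.inl ⟨j, j', rfl, rfl⟩))⟩

/-- The merging map determined by an item assignment `φ` and a unit assignment `σ`. -/
def mergeMap (φ : Fin n → Fin k) (σ : (x : Fin n) × Fin (a x) → Fin (C * k)) :
    BPVert n C k a → BPVert n C k a
  | Sum.inl i => b i
  | Sum.inr (Sum.inl j) => d j
  | Sum.inr (Sum.inr (Sum.inl x)) => b (φ x)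
  | Sum.inr (Sum.inr (Sum.inr u)) => d (σ u)

theorem isContractionOf_of_equiv (φ : Fin n → Fin k)
    (σ : ((x : Fin n) × Fin (a x)) ≃ Fin (C * k)) (hσ : ∀ u, slotBin (σ u) = φ u.1) :
    (bpH n C k a).IsContractionOf (bpG n C k a) := by
  let L : List (BPVert n C k a) :=
    (Finset.univ.image fun z : Fin n ⊕ ((x : Fin n) × Fin (a x)) =>
      (Sum.inr (Sum.inr z) : BPVert n C k a)).toList
  have hL : ∀ v, v ∈ L ↔ ∃ z, Sum.inr (Sum.inr z) = v := by simp [L]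
  have hr : ∀ v ∈ L, mergeMap φ σ v ∉ L := by
    intro v hv
    obtain ⟨z, rfl⟩ := (hL v).1 hv
    rw [hL]
    rcases z with x | u <;> simp [mergeMap, b, d]
  have hval : (bpG n C k a).ValidSeq (L.map fun v => (mergeMap φ σ v, v)) := by
    refine LGraph.validSeq_star _ L (Finset.nodup_toList _) hr _ fun v hv => ?_
    obtain ⟨z, rfl⟩ := (hL v).1 hv
    rcases z with x | ⟨x, m⟩ <;> simp [mergeMap, bpG, LGraph.mk', b, d, t, A]
  have hmap : LGraph.seqMap (L.map fun v => (mergeMap φ σ v, v)) = mergeMap φ σ := by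
    funext v
    rw [LGraph.seqMap_star _ L hr]
    split_ifs with h
    · rfl
    · rw [hL] at h
      rcases v with i | j | z
      · rfl
      · rfl
      · exact absurd ⟨z, rfl⟩ h
  have hverts := LGraph.contractSeq_verts _ _ hval
  rw [hmap] at hverts
  refine ⟨_, hval, LGraph.ext' ?_ ?_⟩
  · ext v
    have hH : v ∈ (bpH n C k a).verts ↔ ∃ w, mergeMap φ σ w = v := by
      rw [mem_bpH]
      constructor
      · rintro (⟨i, rfl⟩ | ⟨j, rfl⟩)
        · exact ⟨b i, rfl⟩
        · exact ⟨d j, rfl⟩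
      · rintro ⟨i | j | x | u, rfl⟩
        · exact Or.inl ⟨_, rfl⟩
        · exact Or.inr ⟨_, rfl⟩
        · exact Or.inl ⟨_, rfl⟩
        · exact Or.inr ⟨_, rfl⟩
    rw [hH]
    constructor
    · exact fun h => ⟨v, hverts.2.2 v h⟩
    · rintro ⟨w, rfl⟩
      exact hverts.2.1 w (Finset.mem_univ w)
  · have hedge : ∀ (i : Fin k) (j : Fin (C * k)), slotBin j = i →
        mergeMap φ σ (t (σ.symm j).1) = b i ∧
        mergeMap φ σ (A (σ.symm j).1 (σ.symm j).2) = d j := by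
      rintro i j rfl
      refine ⟨?_, congrArg d (σ.apply_symm_apply j)⟩
      have h := hσ (σ.symm j)
      rw [Equiv.apply_symm_apply] at h
      exact congrArg b h.symm
    intro x y
    rw [LGraph.contractSeq_adj _ _ hval, hmap]
    constructor
    · rintro ⟨hne, x', y', h, rfl, rfl⟩
      revert hne
      refine bpG_adj_cases (P := fun x y => mergeMap φ σ x ≠ mergeMap φ σ y →
        (bpH n C k a).Adj (mergeMap φ σ x) (mergeMap φ σ y)) ?_ ?_ ?_ ?_ ?_ ?_ h
      · exact fun x y h hne => LGraph.symm _ (h hne.symm)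
      · exact fun i i' => bpH_adj_bb
      · exact fun j j' => bpH_adj_dd
      · exact fun i x => bpH_adj_bb
      · exact fun u _ => (bpH_adj_bd _ _).2 (hσ u)
      · exact fun u j => bpH_adj_dd
    · intro h
      have hne : x ≠ y := fun e => LGraph.loopless _ y (e ▸ h)
      refine ⟨hne, ?_⟩
      rcases mem_bpH.1 (LGraph.mem_of_adj _ h).1 with ⟨i, rfl⟩ | ⟨j, rfl⟩ <;>
        rcases mem_bpH.1 (LGraph.mem_of_adj _ h).2 with ⟨i', rfl⟩ | ⟨j', rfl⟩
      · exact ⟨b i, b i', bpG_adj_bb fun e => hne (by rw [e]), rfl, rfl⟩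
      · obtain ⟨h1, h2⟩ := hedge i j' ((bpH_adj_bd _ _).1 h)
        exact ⟨_, _, bpG_adj_tA (σ.symm j'), h1, h2⟩
      · obtain ⟨h1, h2⟩ := hedge i' j ((bpH_adj_bd _ _).1 (LGraph.symm _ h))
        exact ⟨_, _, LGraph.symm _ (bpG_adj_tA (σ.symm j)), h2, h1⟩
      · exact ⟨d j, d j', bpG_adj_dd fun e => hne (by rw [e]), rfl, rfl⟩

theorem packing_of_isContractionOf (hsum : ∑ x, a x = C * k) (hC : 0 < C) (hk : 2 ≤ k)
    (h : (bpH n C k a).IsContractionOf (bpG n C k a)) :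
    ∃ φ : Fin n → Fin k, ∃ σ : ((x : Fin n) × Fin (a x)) ≃ Fin (C * k),
      ∀ u, slotBin (σ u) = φ u.1 := by
  obtain ⟨S, hS, hH⟩ := h
  have hadj := LGraph.contractSeq_adj S _ hS
  obtain ⟨-, hv, hfix⟩ := LGraph.contractSeq_verts S _ hS
  rw [hH] at hadj hv hfix
  generalize LGraph.seqMap S = f at hadj hv hfix
  have hfb : ∀ i, f (b i) = b i := fun i => hfix _ (b_mem_bpH i)
  have hfd : ∀ j, f (d j) = d j := fun j => hfix _ (d_mem_bpH j)
  have hfv : ∀ v, (∃ i, f v = b i) ∨ ∃ j, f v = d j := fun v =>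
    mem_bpH.1 (hv v (Finset.mem_univ v))
  have ht : ∀ x, ∃ i, f (t x) = b i := by
    intro x
    refine (hfv (t x)).resolve_right ?_
    rintro ⟨j, hj⟩
    have h1 : ∀ i, slotBin j = i := fun i => by
      rw [← bpH_adj_bd (n := n) (a := a), hadj]
      exact ⟨b_ne_d i j, b i, t x, bpG_adj_bt i x, hfb i, hj⟩
    have h2 := (h1 ⟨0, by omega⟩).symm.trans (h1 ⟨1, by omega⟩)
    simp at h2
  have hA : ∀ u : (x : Fin n) × Fin (a x), ∃ j, f (A u.1 u.2) = d j := by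
    intro u
    refine (hfv _).resolve_left ?_
    rintro ⟨i, hi⟩
    have h1 : ∀ j : Fin (C * k), slotBin j = i := fun j => by
      rw [← bpH_adj_bd (n := n) (a := a), hadj]
      exact ⟨b_ne_d i j, A u.1 u.2, d j, bpG_adj_Ad u j, hi, hfd j⟩
    have hCk : C < C * k := lt_mul_of_one_lt_right hC hk
    have h2 := (h1 ⟨0, by omega⟩).trans (h1 ⟨C, hCk⟩).symm
    simp [slotBin, Nat.div_self hC] at h2
  choose φ hφ using ht
  choose τ hτ using hA
  have hτφ : ∀ j, ∃ u, τ u = j ∧ φ u.1 = slotBin j := by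
    intro j
    obtain ⟨-, x', y', h1, h2, h3⟩ := (hadj _ _).1 ((bpH_adj_bd _ j).2 rfl)
    have key : ∀ i v, f v = b i → f v = d j → False := fun i v h hd =>
      b_ne_d i j (h.symm.trans hd)
    -- Edges inside `B ∪ T` or inside `A ∪ D` do not join a `b`-fiber to a `d`-fiber.
    refine (bpG_adj_cases (P := fun x y =>
      (f x = b (slotBin j) → f y = d j → ∃ u, τ u = j ∧ φ u.1 = slotBin j) ∧
      (f y = b (slotBin j) → f x = d j → ∃ u, τ u = j ∧ φ u.1 = slotBin j))
      ?_ ?_ ?_ ?_ ?_ ?_ h1).1 h2 h3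
    · exact fun x y h => ⟨h.2, h.1⟩
    · exact fun i i' => ⟨fun _ h => (key _ _ (hfb _) h).elim, fun _ h => (key _ _ (hfb _) h).elim⟩
    · exact fun i i' => ⟨fun h _ => absurd (h.symm.trans (hfd _)) (b_ne_d _ _),
        fun h _ => absurd (h.symm.trans (hfd _)) (b_ne_d _ _)⟩
    · exact fun i x => ⟨fun _ h => (key _ _ (hφ _) h).elim, fun _ h => (key _ _ (hfb _) h).elim⟩
    · exact fun u => ⟨fun h h' => ⟨u, d_inj.1 ((hτ u).symm.trans h'),
        b_inj.1 ((hφ u.1).symm.trans h)⟩, fun h _ => absurd (h.symm.trans (hτ u)) (b_ne_d _ _)⟩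
    · exact fun u i => ⟨fun h _ => absurd (h.symm.trans (hτ u)) (b_ne_d _ _),
        fun h _ => absurd (h.symm.trans (hfd _)) (b_ne_d _ _)⟩
  have hbij : Function.Bijective τ :=
    (Fintype.bijective_iff_surjective_and_card τ).2
      ⟨fun j => (hτφ j).imp fun _ h => h.1, by simp [hsum]⟩
  refine ⟨φ, Equiv.ofBijective τ hbij, fun u => ?_⟩
  obtain ⟨w, hw, hw'⟩ := hτφ (τ u)
  rw [hbij.1 hw] at hw'
  exact hw'.symm

end Reduction

/-- With positive item sizes `a_0, …, a_{n−1}` summing to `Ck`, the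
items can be perfectly packed into `k` bins of capacity `C` iff `H` is a labeled
contraction of `G`, where `G` and `H` are the graphs of the reduction. -/
theorem perfectBinPacking_iff_isContractionOf (n C k : ℕ) (a : Fin n → ℕ)
    (hpos : ∀ x, 0 < a x) (hsum : ∑ x, a x = C * k) :
    (∃ φ : Fin n → Fin k, ∀ i : Fin k,
        ∑ x ∈ Finset.univ.filter (fun x => φ x = i), a x = C) ↔
      (bpH n C k a).IsContractionOf (bpG n C k a) := by
  constructor
  · rintro ⟨φ, hφ⟩
    obtain ⟨σ, hσ⟩ := (packing_iff φ).1 hφ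
    exact isContractionOf_of_equiv φ σ hσ
  · intro h
    by_cases h0 : C * k = 0
      -- Positivity of the sizes leaves no items at all.
    · have hn : ∀ x : Fin n, False := fun x => by
        have h1 := Finset.single_le_sum (f := a) (fun _ _ => Nat.zero_le _) (Finset.mem_univ x)
        have := hpos x
        omega
      refine ⟨fun x => (hn x).elim, fun i => ?_⟩
      have hC : C = 0 := (Nat.mul_eq_zero.1 h0).resolve_right (by have := i.2; omega)
      rw [hC]
      exact Finset.sum_eq_zero fun x => (hn x).elim
    · have hC : 0 < C := Nat.pos_of_ne_zero fun e => h0 (by simp [e])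
      have hk0 : k ≠ 0 := fun e => h0 (by simp [e])
      by_cases hk : k = 1
      · subst hk
        exact ⟨fun _ => 0, fun i => by simpa [Subsingleton.elim i 0] using hsum⟩
      · obtain ⟨φ, σ, hσ⟩ := packing_of_isContractionOf hsum hC (by omega) h
        exact ⟨φ, (packing_iff φ).2 ⟨σ, hσ⟩⟩
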